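/- arXiv:2302.11946 — 2 statements merged into one kernel-verified Lean document; each statement's English description precedes it below -/
import Mathlib

section
/- There exists a constant C₂ > 0 such that for every v ∈ L²(𝕋^d) with ∫_{𝕋^d} v(ξ) dξ = 0 the spectral gap (Poincaré-type) inequality (1/2) ∫_{𝕋^d} ∫_{ℝ^d} a(ξ−η) (v(η) − v(ξ))² dη dξ ≥ C₂ ‖v‖²_{L²(𝕋^d)} holds (with v extended ℤ^d-periodically to ℝ^d). -/
open MeasureTheory

noncomputable section

/-- The periodicity cell `[0,1)^d`, identified with the torus `𝕋^d`. -/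
def cube (d : ℕ) : Set (Fin d → ℝ) := Set.univ.pi fun _ => Set.Ico (0 : ℝ) 1

open scoped ENNReal Pointwise

/-- `ℤ^d`-periodicity. -/
def Per {d : ℕ} {β : Type*} (f : (Fin d → ℝ) → β) : Prop :=
  ∀ ξ, ∀ k : Fin d → ℤ, f (ξ + fun i => (k i : ℝ)) = f ξ

lemma cube_eq (d : ℕ) : cube d = ZSpan.fundamentalDomain (Pi.basisFun ℝ (Fin d)) := by
  rw [ZSpan.fundamentalDomain_pi_basisFun]; rfl

lemma cube_meas (d : ℕ) : MeasurableSet (cube d) :=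
  MeasurableSet.univ_pi fun _ => measurableSet_Ico

lemma cube_vol (d : ℕ) : volume (cube d) = 1 := by
  simp [cube, volume_pi_pi]

lemma shift_cube {d : ℕ} (f : (Fin d → ℝ) → ℝ≥0∞) (hf : Per f)
    (z : Fin d → ℝ) : ∫⁻ ξ in cube d, f (ξ + z) = ∫⁻ ξ in cube d, f ξ := by
  have h1 := ZSpan.isAddFundamentalDomain' (Pi.basisFun ℝ (Fin d)) volume
  rw [← cube_eq] at h1
  have h2 := h1.vadd_of_comm z
  have hinv : ∀ (g : (Submodule.span ℤ (Set.range (Pi.basisFun ℝ (Fin d)))).toAddSubgroup) (x : Fin d → ℝ),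
      f (g +ᵥ x) = f x := by
    rintro ⟨g, hg⟩ x
    rw [Submodule.mem_toAddSubgroup, Module.Basis.mem_span_iff_repr_mem] at hg
    choose k hk using hg
    have : g = fun i => (k i : ℝ) := by
      ext i
      have := hk i
      simp at this
      exact this.symm
    rw [← hf x k, ← this, add_comm]
    rfl
  have : Countable (Submodule.span ℤ (Set.range (Pi.basisFun ℝ (Fin d)))).toAddSubgroup :=
    inferInstanceAs (Countable (Submodule.span ℤ (Set.range (Pi.basisFun ℝ (Fin d)))))
  rw [h1.setLIntegral_eq h2 f hinv]
  have h3 : (z +ᵥ cube d) = (fun x => x + z) '' cube d := by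
    ext x
    simp only [Set.mem_vadd_set, Set.mem_image, vadd_eq_add, add_comm z]
  rw [h3]
  have := (measurePreserving_add_right (volume : Measure (Fin d → ℝ)) z).setLIntegral_comp_emb
    (measurableEmbedding_addRight z) f (cube d)
  rw [this]

/-- squared difference -/
def sqd {d : ℕ} (v : (Fin d → ℝ) → ℝ) (x y : Fin d → ℝ) : ℝ≥0∞ := ENNReal.ofReal ((v x - v y) ^ 2)

lemma sq_tri {d : ℕ} (v : (Fin d → ℝ) → ℝ) (x y z : Fin d → ℝ) :
    sqd v x z ≤ 2 * sqd v x y + 2 * sqd v y z := by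
  unfold sqd
  rw [show (2 : ℝ≥0∞) = ENNReal.ofReal 2 by simp, ← ENNReal.ofReal_mul (by norm_num),
    ← ENNReal.ofReal_mul (by norm_num), ← ENNReal.ofReal_add (by positivity) (by positivity)]
  apply ENNReal.ofReal_le_ofReal
  nlinarith [sq_nonneg ((v x - v y) - (v y - v z))]

lemma sq_symm {d : ℕ} (v : (Fin d → ℝ) → ℝ) (x y : Fin d → ℝ) : sqd v x y = sqd v y x := by
  unfold sqd; congr 1; ring

lemma sq_meas {d : ℕ} {v : (Fin d → ℝ) → ℝ} (hv : Measurable v) :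
    Measurable (fun p : (Fin d → ℝ) × (Fin d → ℝ) => sqd v p.1 p.2) := by
  unfold sqd; fun_prop

lemma sqd_comp {d : ℕ} {α : Type*} [MeasurableSpace α] {v : (Fin d → ℝ) → ℝ} (hv : Measurable v)
    {f g : α → (Fin d → ℝ)} (hf : Measurable f) (hg : Measurable g) :
    Measurable (fun x => sqd v (f x) (g x)) := by
  unfold sqd; fun_prop

/-- Displacement functional. -/
def Dd {d : ℕ} (v : (Fin d → ℝ) → ℝ) (z : Fin d → ℝ) : ℝ≥0∞ := ∫⁻ ξ in cube d, sqd v (ξ + z) ξ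

lemma Dd_meas {d : ℕ} {v : (Fin d → ℝ) → ℝ} (hv : Measurable v) : Measurable (Dd v) := by
  unfold Dd
  apply Measurable.lintegral_prod_right'
    (f := fun (p : (Fin d → ℝ) × (Fin d → ℝ)) => sqd v (p.2 + p.1) p.2)
  exact sqd_comp hv (by fun_prop) (by fun_prop)

lemma sq_per {d : ℕ} {v : (Fin d → ℝ) → ℝ} (hp : Per v) (z : Fin d → ℝ) :
    Per (fun ξ => sqd v (ξ + z) ξ) := by
  intro ξ k
  simp only [sqd]
  rw [hp, add_right_comm, hp]

lemma sq_meas2 {d : ℕ} {v : (Fin d → ℝ) → ℝ} (hv : Measurable v) (z w : Fin d → ℝ) :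
    Measurable (fun ξ => sqd v (ξ + z) (ξ + w)) :=
  sqd_comp hv (by fun_prop) (by fun_prop)

lemma Dd_shift {d : ℕ} {v : (Fin d → ℝ) → ℝ} (hp : Per v) (z w : Fin d → ℝ) :
    ∫⁻ ξ in cube d, sqd v (ξ + w + z) (ξ + w) = Dd v z :=
  shift_cube _ (sq_per hp z) w

lemma Dd_add {d : ℕ} {v : (Fin d → ℝ) → ℝ} (hv : Measurable v) (hp : Per v) (z w : Fin d → ℝ) :
    Dd v (w + z) ≤ 2 * Dd v z + 2 * Dd v w := by
  rw [← Dd_shift hp z w]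
  unfold Dd
  rw [← lintegral_const_mul' _ _ (by simp), ← lintegral_const_mul' _ _ (by simp),
    ← lintegral_add_right]
  · apply lintegral_mono
    intro ξ
    simp only [← add_assoc]
    exact sq_tri v _ _ _
  · have := sq_meas2 hv w 0
    simp only [add_zero] at this
    exact this.const_mul _

lemma Dd_sub {d : ℕ} {v : (Fin d → ℝ) → ℝ} (hv : Measurable v) (hp : Per v) (z w : Fin d → ℝ) :
    Dd v z ≤ 2 * Dd v (w + z) + 2 * Dd v w := by
  rw [← Dd_shift hp z w]
  unfold Dd
  rw [← lintegral_const_mul' _ _ (by simp), ← lintegral_const_mul' _ _ (by simp),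
    ← lintegral_add_right]
  · apply lintegral_mono
    intro ξ
    simp only [← add_assoc]
    rw [sq_symm v (ξ + w) ξ]
    exact sq_tri v _ _ _
  · have := sq_meas2 hv w 0
    simp only [add_zero] at this
    exact this.const_mul _

lemma Dd_pow {d : ℕ} {v : (Fin d → ℝ) → ℝ} (hv : Measurable v) (hp : Per v) (n : ℕ) :
    ∀ z : Fin d → ℝ, Dd v ((2 : ℝ) ^ n • z) ≤ 4 ^ n * Dd v z := by
  induction n with
  | zero => intro z; simp
  | succ n ih =>
    intro z
    have h := Dd_add hv hp ((2 : ℝ) ^ n • z) ((2 : ℝ) ^ n • z)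
    rw [← add_smul, ← two_mul, ← pow_succ'] at h
    calc _ ≤ _ := h
      _ = 4 * Dd v ((2 : ℝ) ^ n • z) := by ring
      _ ≤ 4 * (4 ^ n * Dd v z) := by gcongr; exact ih z
      _ = _ := by ring

/-- The norm is bounded by the averaged displacement (mean zero is used here). -/
lemma norm_le_avg {d : ℕ} {v : (Fin d → ℝ) → ℝ} (hv : Measurable v) (hp : Per v)
    (hi : IntegrableOn (fun ξ => (v ξ) ^ 2) (cube d)) (h0 : (∫ ξ in cube d, v ξ) = 0) :
    ∫⁻ ξ in cube d, ENNReal.ofReal ((v ξ) ^ 2) ≤ ∫⁻ z in cube d, Dd v z := by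
  have hfin : IsFiniteMeasure (volume.restrict (cube d)) := ⟨by simp [cube_vol]⟩
  unfold Dd
  rw [lintegral_lintegral_swap]
  · apply lintegral_mono
    intro ξ
    have e : ∫⁻ z in cube d, sqd v (ξ + z) ξ = ∫⁻ z in cube d, sqd v z ξ := by
      rw [← shift_cube (fun z => sqd v z ξ) (by intro x k; simp only [sqd]; rw [hp]) ξ]
      simp only [add_comm]
    simp only
    rw [e]
    unfold sqd
    have hL2 : MemLp v 2 (volume.restrict (cube d)) :=
      (memLp_two_iff_integrable_sq hv.aestronglyMeasurable).2 hi
    have hL1 : Integrable v (volume.restrict (cube d)) := hL2.integrable (by norm_num)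
    have hi2 : Integrable (fun z => (v z - v ξ) ^ 2) (volume.restrict (cube d)) :=
      (hL2.sub (memLp_const (v ξ))).integrable_sq
    rw [← ofReal_integral_eq_lintegral_ofReal hi2 (Filter.Eventually.of_forall fun _ => sq_nonneg _)]
    apply ENNReal.ofReal_le_ofReal
    have : ∫ z in cube d, (v z - v ξ) ^ 2
        = (∫ z in cube d, (v z) ^ 2) - (∫ z in cube d, 2 * v ξ * v z) + ∫ z in cube d, v ξ ^ 2 := by
      rw [← integral_sub hi (hL1.const_mul _), ← integral_add]
      · congr 1; ext z; ring
      · exact hi.sub (hL1.const_mul _)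
      · exact integrable_const _
    rw [this, integral_const_mul, h0]
    have h1 : 0 ≤ ∫ z in cube d, (v z) ^ 2 := integral_nonneg fun _ => sq_nonneg _
    simp [Measure.real, cube_vol]
    exact h1
  · apply Measurable.aemeasurable
    exact sqd_comp hv (by fun_prop) (by fun_prop)

lemma Dd_fin {d : ℕ} {v : (Fin d → ℝ) → ℝ} (hv : Measurable v) (hp : Per v) (z : Fin d → ℝ) :
    Dd v z ≤ 4 * ∫⁻ ξ in cube d, ENNReal.ofReal ((v ξ) ^ 2) := by
  have h1 : ∫⁻ ξ in cube d, ENNReal.ofReal ((v (ξ + z)) ^ 2) =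
      ∫⁻ ξ in cube d, ENNReal.ofReal ((v ξ) ^ 2) :=
    shift_cube (fun ξ => ENNReal.ofReal ((v ξ) ^ 2)) (by intro x k; simp only; rw [hp]) z
  have h2 : Dd v z ≤ ∫⁻ ξ in cube d, (2 * ENNReal.ofReal ((v (ξ + z)) ^ 2)
      + 2 * ENNReal.ofReal ((v ξ) ^ 2)) := by
    apply lintegral_mono
    intro ξ
    simp only [sqd]
    rw [show (2 : ℝ≥0∞) = ENNReal.ofReal 2 by simp, ← ENNReal.ofReal_mul (by norm_num),
      ← ENNReal.ofReal_mul (by norm_num), ← ENNReal.ofReal_add (by positivity) (by positivity)]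
    apply ENNReal.ofReal_le_ofReal
    nlinarith [sq_nonneg (v (ξ + z) + v ξ)]
  refine h2.trans_eq ?_
  rw [lintegral_add_right _ (by fun_prop), lintegral_const_mul' _ _ (by simp),
    lintegral_const_mul' _ _ (by simp), h1]
  ring

lemma exists_K {d : ℕ} (a : (Fin d → ℝ) → ℝ) (hameas : Measurable a)
    (hanonneg : ∀ z, 0 ≤ a z) (hamass : ∫ z, a z = 1) :
    ∃ δ : ℝ, 0 < δ ∧ ∃ K : Set (Fin d → ℝ), IsCompact K ∧ 0 < volume K ∧ ∀ z ∈ K, δ ≤ a z := by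
  by_contra! H
  have h1 : ∀ n : ℕ, volume {z | 1 / ((n : ℝ) + 1) ≤ a z} = 0 := by
    intro n
    by_contra hne
    have hm : MeasurableSet {z | 1 / ((n : ℝ) + 1) ≤ a z} := measurableSet_le measurable_const hameas
    obtain ⟨K, hKs, hK, hKp⟩ := hm.exists_lt_isCompact (pos_iff_ne_zero.2 hne)
    obtain ⟨z, hz, hz2⟩ := H (1 / ((n : ℝ) + 1)) (by positivity) K hK hKp
    exact absurd (hKs hz) (not_le.2 hz2)
  have h2 : ∀ᵐ z, a z = 0 := by
    have h3 : ∀ᵐ z, ∀ n : ℕ, ¬ (1 / ((n : ℝ) + 1) ≤ a z) := by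
      rw [ae_all_iff]
      intro n
      rw [ae_iff]
      simpa using h1 n
    filter_upwards [h3] with z hz
    by_contra hne
    obtain ⟨n, hn⟩ := exists_nat_one_div_lt (lt_of_le_of_ne (hanonneg z) (Ne.symm hne))
    exact hz n hn.le
  rw [integral_eq_zero_of_ae h2] at hamass
  norm_num at hamass

/-- Core estimate. -/
lemma core {d : ℕ} (a : (Fin d → ℝ) → ℝ) (hameas : Measurable a)
    (hanonneg : ∀ z, 0 ≤ a z) (hamass : ∫ z, a z = 1) :
    ∃ M : ℝ≥0∞, M ≠ ⊤ ∧ ∀ v : (Fin d → ℝ) → ℝ, Measurable v → Per v →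
      ∀ z ∈ cube d, Dd v z ≤ M * ∫⁻ z, ENNReal.ofReal (a z) * Dd v z := by
  obtain ⟨δ, hδ, K, hK, hKp, hKa⟩ := exists_K a hameas hanonneg hamass
  have hKfin : volume K ≠ ⊤ := hK.measure_lt_top.ne
  have ht := tendsto_measure_vadd_sdiff_isCompact_isClosed (μ := (volume : Measure (Fin d → ℝ)))
    hK hK.isClosed
  have hev := ht.eventually (gt_mem_nhds (ENNReal.half_pos hKp.ne'))
  obtain ⟨r, hr, hball⟩ := Metric.eventually_nhds_iff.1 hev
  obtain ⟨n, hn⟩ := pow_unbounded_of_one_lt (1 / r) (one_lt_two (α := ℝ))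
  set c := volume K / 2 with hc
  have hc0 : c ≠ 0 := (ENNReal.half_pos hKp.ne').ne'
  have hcf : c ≠ ⊤ := by simp [hc, ENNReal.div_eq_top, hKfin]
  have hδ0 : ENNReal.ofReal δ ≠ 0 := by simpa using hδ
  refine ⟨4 ^ n * (4 * (c * ENNReal.ofReal δ)⁻¹), ?_, ?_⟩
  · refine ENNReal.mul_ne_top (by simp) (ENNReal.mul_ne_top (by simp) ?_)
    simp [hc0, hδ]
  intro v hv hp z hz
  set E := ∫⁻ z, ENNReal.ofReal (a z) * Dd v z with hE
  have hKE : ENNReal.ofReal δ * ∫⁻ w in K, Dd v w ≤ E := by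
    rw [← lintegral_const_mul' _ _ (by simp)]
    calc _ ≤ ∫⁻ w in K, ENNReal.ofReal (a w) * Dd v w := by
          apply setLIntegral_mono' hK.measurableSet
          intro w hw
          gcongr
          exact hKa w hw
      _ ≤ _ := setLIntegral_le_lintegral _ _
  have hsmall : ∀ y : Fin d → ℝ, ‖y‖ < r → Dd v y ≤ 4 * (c * ENNReal.ofReal δ)⁻¹ * E := by
    intro y hy
    set S := K ∩ (fun w => w + y) ⁻¹' K with hS
    have hSm : MeasurableSet S := hK.measurableSet.inter
      (hK.measurableSet.preimage (by fun_prop))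
    have hSc : c ≤ volume S := by
      have h1 : volume ((y +ᵥ K) \ K) < c := hball (by simpa using hy)
      have h2 : volume (y +ᵥ K) = volume K := measure_vadd _ _ _
      have h3 : volume ((y +ᵥ K) ∩ K) = volume S := by
        have : (fun w => w + y) ⁻¹' ((y +ᵥ K) ∩ K) = S := by
          ext w
          simp [hS, Set.mem_vadd_set_iff_neg_vadd_mem]
        rw [← this, measure_preimage_add_right]
      have h4 : volume K ≤ volume S + c := by
        rw [← h3, ← h2, ← measure_inter_add_sdiff (y +ᵥ K) hK.measurableSet]
        gcongr
      have h5 : c + c ≤ volume S + c := by rwa [hc, ENNReal.add_halves]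
      exact (ENNReal.add_le_add_iff_right hcf).1 h5
    have h6 : c * Dd v y ≤ 4 * ∫⁻ w in K, Dd v w := by
      calc c * Dd v y ≤ volume S * Dd v y := by gcongr
        _ = ∫⁻ w in S, Dd v y := by simp [mul_comm]
        _ ≤ ∫⁻ w in S, (2 * Dd v (w + y) + 2 * Dd v w) := by
            apply lintegral_mono
            intro w
            exact Dd_sub hv hp y w
        _ = 2 * (∫⁻ w in S, Dd v (w + y)) + 2 * ∫⁻ w in S, Dd v w := by
            rw [lintegral_add_right _ ((Dd_meas hv).const_mul _), lintegral_const_mul' _ _ (by simp),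
              lintegral_const_mul' _ _ (by simp)]
        _ ≤ 2 * (∫⁻ w in K, Dd v w) + 2 * ∫⁻ w in K, Dd v w := by
            gcongr 2 * ?_ + 2 * ?_
            · calc _ ≤ ∫⁻ w in (fun w => w + y) ⁻¹' K, Dd v (w + y) :=
                    lintegral_mono_set Set.inter_subset_right
                _ = _ := (measurePreserving_add_right (volume : Measure (Fin d → ℝ))
                    y).setLIntegral_comp_preimage_emb (measurableEmbedding_addRight y) (Dd v) K
            · exact lintegral_mono_set Set.inter_subset_left
        _ = _ := by ring
    have h7 : (c * ENNReal.ofReal δ) * Dd v y ≤ 4 * E := by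
      calc _ = ENNReal.ofReal δ * (c * Dd v y) := by ring
        _ ≤ ENNReal.ofReal δ * (4 * ∫⁻ w in K, Dd v w) := by gcongr
        _ = 4 * (ENNReal.ofReal δ * ∫⁻ w in K, Dd v w) := by ring
        _ ≤ _ := by gcongr
    have hne : c * ENNReal.ofReal δ ≠ 0 := mul_ne_zero hc0 hδ0
    have hnt : c * ENNReal.ofReal δ ≠ ⊤ := ENNReal.mul_ne_top hcf (by simp)
    calc Dd v y = (c * ENNReal.ofReal δ)⁻¹ * ((c * ENNReal.ofReal δ) * Dd v y) := by
          rw [← mul_assoc, ENNReal.inv_mul_cancel hne hnt, one_mul]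
      _ ≤ (c * ENNReal.ofReal δ)⁻¹ * (4 * E) := by gcongr
      _ = _ := by ring
  have hzn : ‖z‖ ≤ 1 := by
    rw [pi_norm_le_iff_of_nonneg zero_le_one]
    intro i
    have := hz i (Set.mem_univ i)
    rw [Real.norm_eq_abs, abs_le]
    constructor <;> linarith [this.1, this.2]
  have h2 : (0 : ℝ) < 2 ^ n := by positivity
  have hy : ‖((2 : ℝ) ^ n)⁻¹ • z‖ < r := by
    rw [norm_smul, norm_inv, Real.norm_of_nonneg h2.le]
    rw [div_lt_iff₀ hr] at hn
    rw [inv_mul_lt_iff₀ h2]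
    linarith
  have h8 := Dd_pow hv hp n (((2 : ℝ) ^ n)⁻¹ • z)
  rw [smul_inv_smul₀ h2.ne'] at h8
  calc _ ≤ _ := h8
    _ ≤ 4 ^ n * (4 * (c * ENNReal.ofReal δ)⁻¹ * E) := by gcongr; exact hsmall _ hy
    _ = _ := by ring

/-- The quadratic form as an integral of the displacement functional. -/
lemma form_eq {d : ℕ} (a : (Fin d → ℝ) → ℝ) (hameas : Measurable a)
    (hasymm : ∀ z, a (-z) = a z) {v : (Fin d → ℝ) → ℝ} (hv : Measurable v) :
    ∫⁻ ξ in cube d, ∫⁻ η, ENNReal.ofReal (a (ξ - η)) * sqd v η ξ =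
      ∫⁻ z, ENNReal.ofReal (a z) * Dd v z := by
  have h1 : ∀ ξ, ∫⁻ η, ENNReal.ofReal (a (ξ - η)) * sqd v η ξ =
      ∫⁻ z, ENNReal.ofReal (a z) * sqd v (ξ + z) ξ := by
    intro ξ
    rw [← lintegral_add_left_eq_self (fun η => ENNReal.ofReal (a (ξ - η)) * sqd v η ξ) ξ]
    apply lintegral_congr
    intro z
    rw [show ξ - (ξ + z) = -z by abel, hasymm]
  simp_rw [h1]
  rw [lintegral_lintegral_swap]
  · apply lintegral_congr
    intro z
    rw [lintegral_const_mul' _ _ (by simp)]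
    rfl
  · apply Measurable.aemeasurable
    have h2 : Measurable (fun p : (Fin d → ℝ) × (Fin d → ℝ) => sqd v (p.1 + p.2) p.1) :=
      sqd_comp hv (by fun_prop) (by fun_prop)
    have h3 : Measurable (fun p : (Fin d → ℝ) × (Fin d → ℝ) => ENNReal.ofReal (a p.2)) := by
      fun_prop
    exact h3.mul h2


/-- Spectral gap (Poincaré-type) inequality: there is `C₂ > 0` such that for every
`v ∈ L²(𝕋^d)` with zero mean,
`(1/2) ∫_{𝕋^d} ∫_{ℝ^d} a(ξ-η)(v(η)-v(ξ))² dη dξ ≥ C₂ ‖v‖²_{L²(𝕋^d)}`. -/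
theorem stmt6 {d : ℕ} (hd : 1 ≤ d)
    (a : (Fin d → ℝ) → ℝ) (hameas : Measurable a) (haint : Integrable a)
    (hanonneg : ∀ z, 0 ≤ a z) (hamass : ∫ z, a z = 1)
    (hamom : Integrable (fun z => ‖z‖ ^ 2 * a z))
    (hasymm : ∀ z, a (-z) = a z) :
    ∃ C₂ : ℝ, 0 < C₂ ∧
      ∀ v : (Fin d → ℝ) → ℝ, Measurable v →
        (∀ ξ, ∀ k : Fin d → ℤ, v (ξ + fun i => (k i : ℝ)) = v ξ) →
        IntegrableOn (fun ξ => (v ξ) ^ 2) (cube d) →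
        (∫ ξ in cube d, v ξ) = 0 →
        C₂ * ∫ ξ in cube d, (v ξ) ^ 2 ≤
          (1 / 2) * ∫ ξ in cube d, ∫ η, a (ξ - η) * (v η - v ξ) ^ 2 := by
  obtain ⟨M, hM, hcore⟩ := core a hameas hanonneg hamass
  refine ⟨1 / (2 * (M.toReal + 1)), by positivity, ?_⟩
  intro v hv hp hi h0
  have hfin : IsFiniteMeasure (volume.restrict (cube d)) := ⟨by simp [cube_vol]⟩
  set N := ∫⁻ ξ in cube d, ENNReal.ofReal ((v ξ) ^ 2) with hN
  set E := ∫⁻ z, ENNReal.ofReal (a z) * Dd v z with hE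
  have hNr : ∫ ξ in cube d, (v ξ) ^ 2 = N.toReal :=
    integral_eq_lintegral_of_nonneg_ae (Filter.Eventually.of_forall fun _ => sq_nonneg _)
      (hv.pow_const 2).aestronglyMeasurable
  have hNfin : N ≠ ⊤ := hi.lintegral_lt_top.ne
  have hNE : N ≤ M * E := by
    calc N ≤ ∫⁻ z in cube d, Dd v z := norm_le_avg hv hp hi h0
      _ ≤ ∫⁻ z in cube d, M * E := setLIntegral_mono' (cube_meas d) (hcore v hv hp)
      _ = M * E := by simp [cube_vol]
  have hEfin : E ≠ ⊤ := by
    have : E ≤ (∫⁻ z, ENNReal.ofReal (a z)) * (4 * N) := by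
      rw [← lintegral_mul_const _ (by fun_prop)]
      apply lintegral_mono
      intro z
      simp only
      gcongr
      exact Dd_fin hv hp z
    refine ne_top_of_le_ne_top ?_ this
    exact ENNReal.mul_ne_top haint.lintegral_lt_top.ne (ENNReal.mul_ne_top (by simp) hNfin)
  have hform := form_eq a hameas hasymm hv
  set G : (Fin d → ℝ) → ℝ≥0∞ := fun ξ => ∫⁻ η, ENNReal.ofReal (a (ξ - η)) * sqd v η ξ with hG
  have hGm : Measurable G := by
    apply Measurable.lintegral_prod_right'
      (f := fun (p : (Fin d → ℝ) × (Fin d → ℝ)) => ENNReal.ofReal (a (p.1 - p.2)) * sqd v p.2 p.1)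
    have h2 : Measurable (fun p : (Fin d → ℝ) × (Fin d → ℝ) => sqd v p.2 p.1) :=
      sqd_comp hv (by fun_prop) (by fun_prop)
    have h3 : Measurable (fun p : (Fin d → ℝ) × (Fin d → ℝ) =>
        ENNReal.ofReal (a (p.1 - p.2))) := by
      fun_prop
    exact h3.mul h2
  have hinner : ∀ ξ, ∫ η, a (ξ - η) * (v η - v ξ) ^ 2 = (G ξ).toReal := by
    intro ξ
    rw [integral_eq_lintegral_of_nonneg_ae]
    · simp only [hG, sqd]
      congr 1
      apply lintegral_congr
      intro η
      rw [ENNReal.ofReal_mul (hanonneg _)]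
    · exact Filter.Eventually.of_forall fun η => mul_nonneg (hanonneg _) (sq_nonneg _)
    · apply Measurable.aestronglyMeasurable
      fun_prop
  have hEr : ∫ ξ in cube d, ∫ η, a (ξ - η) * (v η - v ξ) ^ 2 = E.toReal := by
    simp_rw [hinner]
    rw [integral_toReal hGm.aemeasurable, hform]
    apply ae_lt_top hGm
    rw [hform]
    exact hEfin
  rw [hNr, hEr]
  have h9 : N.toReal ≤ M.toReal * E.toReal := by
    rw [← ENNReal.toReal_mul]
    exact ENNReal.toReal_mono (ENNReal.mul_ne_top hM hEfin) hNE
  have hE0 : 0 ≤ E.toReal := ENNReal.toReal_nonneg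
  have hM0 : 0 ≤ M.toReal := ENNReal.toReal_nonneg
  rw [one_div, inv_mul_le_iff₀ (by positivity)]
  nlinarith
end
end

section
/- If ρ ∈ H¹((0,1); L²(𝕋^d)) is periodic in time (ρ(·,0) = ρ(·,1)) and satisfies the adjoint equation −∂_s ρ(ξ,s) − (A(s)ρ(·,s))(ξ) = 0 for almost every (ξ,s) ∈ 𝕋^d × (0,1), then ρ is constant almost everywhere on 𝕋^{d+1}. -/
open MeasureTheory

noncomputable section

/-- The operator `A(s)` applied pointwise. -/
def Aop {d : ℕ} (a : (Fin d → ℝ) → ℝ) (μ : (Fin d → ℝ) → (Fin d → ℝ) → ℝ → ℝ)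
    (s : ℝ) (v : (Fin d → ℝ) → ℝ) (ξ : Fin d → ℝ) : ℝ :=
  ∫ η, a (ξ - η) * μ ξ η s * (v η - v ξ)

lemma calc_aux (g u : ℝ → ℝ) (hg : IntervalIntegrable g volume 0 1)
    (hu : ∀ s ∈ Set.Icc (0 : ℝ) 1, u s = u 0 - ∫ τ in (0:ℝ)..s, g τ) (h1 : u 1 = u 0) :
    ∫ s in (0:ℝ)..1, u s * g s = 0 := by
  have h0 : ∫ τ in (0:ℝ)..1, g τ = 0 := by
    have := hu 1 (by simp); linarith
  set v : ℝ → ℝ := fun s => ∫ τ in (0:ℝ)..s, g τ with hv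
  have hac : AbsolutelyContinuousOnInterval v 0 1 :=
    hg.absolutelyContinuousOnInterval_intervalIntegral (by simp)
  have hp := hac.integral_mul_deriv_eq_deriv_mul hac
  have hd : ∀ᵐ x, x ∈ Set.uIcc (0:ℝ) 1 → deriv v x = g x := by
    filter_upwards [hg.ae_hasDerivAt_integral] with x hx hx1
    exact (hx hx1 0 (by simp)).deriv
  have e1 : ∫ x in (0:ℝ)..1, v x * deriv v x = ∫ x in (0:ℝ)..1, v x * g x := by
    apply intervalIntegral.integral_congr_ae
    filter_upwards [hd] with x hx hx1
    rw [hx (Set.uIoc_subset_uIcc hx1)]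
  have e2 : ∫ x in (0:ℝ)..1, deriv v x * v x = ∫ x in (0:ℝ)..1, v x * g x := by
    apply intervalIntegral.integral_congr_ae
    filter_upwards [hd] with x hx hx1
    rw [hx (Set.uIoc_subset_uIcc hx1), mul_comm]
  have v1 : v 1 = 0 := h0
  have v0 : v 0 = 0 := by simp [hv]
  rw [e1, e2, v1, v0] at hp
  have e3 : ∫ x in (0:ℝ)..1, v x * g x = 0 := by linarith
  have e4 : ∫ s in (0:ℝ)..1, u s * g s = ∫ s in (0:ℝ)..1, (u 0 * g s - v s * g s) := by
    apply intervalIntegral.integral_congr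
    intro s hs
    rw [Set.uIcc_of_le zero_le_one] at hs
    simp only
    rw [hu s hs]; ring
  rw [e4, intervalIntegral.integral_sub (hg.const_mul _) (hg.continuousOn_mul hac.continuousOn),
    intervalIntegral.integral_const_mul, h0, e3]
  simp

lemma fract_mp (t : ℝ) : MeasurePreserving (fun x : ℝ => Int.fract (x + t))
    (volume.restrict (Set.Ico (0:ℝ) 1)) (volume.restrict (Set.Ico (0:ℝ) 1)) := by
  have hm : Measurable (fun x : ℝ => Int.fract (x + t)) :=
    measurable_fract.comp (measurable_id.add_const t)
  refine ⟨hm, ?_⟩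
  ext S hS
  rw [Measure.map_apply hm hS, Measure.restrict_apply (hm hS), Measure.restrict_apply hS]
  have hA : MeasurableSet (Int.fract ⁻¹' S : Set ℝ) := measurable_fract hS
  have key := (isAddFundamentalDomain_Ioc (zero_lt_one) 0 volume).measure_set_eq
    (isAddFundamentalDomain_Ioc (zero_lt_one) t volume) hA (by
      rintro ⟨g, hg⟩
      obtain ⟨n, rfl⟩ := AddSubgroup.mem_zmultiples_iff.1 hg
      ext x
      simp [AddSubgroup.vadd_def])
  have c1 : volume ((fun x : ℝ => Int.fract (x + t)) ⁻¹' S ∩ Set.Ico 0 1)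
      = volume ((Int.fract ⁻¹' S : Set ℝ) ∩ Set.Ico t (t+1)) := by
    rw [← measure_preimage_add_right volume t ((Int.fract ⁻¹' S : Set ℝ) ∩ Set.Ico t (t+1))]
    congr 1
    ext x
    simp [add_comm]
  have c2 : S ∩ Set.Ico (0:ℝ) 1 = (Int.fract ⁻¹' S : Set ℝ) ∩ Set.Ico 0 1 := by
    ext x
    simp only [Set.mem_inter_iff, Set.mem_preimage, and_congr_left_iff]
    intro hx
    rw [Int.fract_eq_self.2 hx]
  have c3 : ∀ r : ℝ, volume ((Int.fract ⁻¹' S : Set ℝ) ∩ Set.Ico r (r+1)) =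
      volume ((Int.fract ⁻¹' S : Set ℝ) ∩ Set.Ioc r (r+1)) := fun r =>
    measure_congr ((Filter.EventuallyEq.refl _ _).inter Ico_ae_eq_Ioc)
  rw [c1, c2, c3, ← key, ← c3]
  simp

/-- coordinatewise fractional part -/
def fr {d : ℕ} (ξ : Fin d → ℝ) : Fin d → ℝ := fun i => Int.fract (ξ i)

lemma fr_eq {d : ℕ} (ξ : Fin d → ℝ) : ξ = fr ξ + fun i => ((⌊ξ i⌋ : ℤ) : ℝ) := by
  ext i; simp [fr]

lemma measurable_fr {d : ℕ} : Measurable (fr : (Fin d → ℝ) → _) :=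
  measurable_pi_iff.2 fun i => measurable_fract.comp (measurable_pi_apply i)

lemma fr_mp {d : ℕ} (z : Fin d → ℝ) : MeasurePreserving (fun ξ => fr (ξ + z))
    (volume.restrict (cube d)) (volume.restrict (cube d)) := by
  have : (volume.restrict (cube d) : Measure (Fin d → ℝ)) =
      Measure.pi (fun _ => volume.restrict (Set.Ico (0:ℝ) 1)) := by
    rw [cube, volume_pi, Measure.restrict_pi_pi]
  rw [this]
  exact measurePreserving_pi _ _ (f := fun i x => Int.fract (x + z i)) (fun i => fract_mp (z i))

lemma cube_finite (d : ℕ) : IsProbabilityMeasure (volume.restrict (cube d) : Measure (Fin d → ℝ)) := by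
  have : (volume.restrict (cube d) : Measure (Fin d → ℝ)) =
      Measure.pi (fun _ => volume.restrict (Set.Ico (0:ℝ) 1)) := by
    rw [cube, volume_pi, Measure.restrict_pi_pi]
  constructor
  rw [this, Measure.pi_univ]
  simp

lemma Phi_mp {d : ℕ} (ν : Measure ℝ) [SFinite ν] : MeasurePreserving
    (fun p : (Fin d → ℝ) × ((Fin d → ℝ) × ℝ) => (-p.1, (fr (p.2.1 + p.1), p.2.2)))
    ((volume : Measure (Fin d → ℝ)).prod ((volume.restrict (cube d)).prod ν))
    ((volume : Measure (Fin d → ℝ)).prod ((volume.restrict (cube d)).prod ν)) := by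
  refine MeasurePreserving.skew_product (g := fun z (q : (Fin d → ℝ) × ℝ) => (fr (q.1 + z), q.2))
    (Measure.measurePreserving_neg volume) ?_ ?_
  · unfold Function.uncurry
    exact (measurable_fr.comp (by fun_prop)).prodMk (by fun_prop)
  · refine Filter.Eventually.of_forall fun z => ?_
    exact ((fr_mp z).prod (MeasurePreserving.id ν)).map_eq

/-- Steinhaus step. -/
lemma steinhaus_aux {d : ℕ} (a : (Fin d → ℝ) → ℝ) (hameas : Measurable a)
    (hamass : ∫ z, a z = 1) (f : (Fin d → ℝ) → ℝ) (hf : Measurable f)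
    (hper : ∀ ξ, f (fr ξ) = f ξ)
    (h : ∀ᵐ z, a z ≠ 0 → ∀ᵐ ξ ∂(volume.restrict (cube d)), f (ξ + z) = f ξ) :
    ∃ c, ∀ᵐ ξ ∂(volume.restrict (cube d)), f ξ = c := by
  have := cube_finite d
  have hshift : ∀ w : Fin d → ℝ, ∀ P : (Fin d → ℝ) → Prop,
      (∀ᵐ ξ ∂(volume.restrict (cube d)), P ξ) →
      (∀ᵐ ξ ∂(volume.restrict (cube d)), P (fr (ξ + w))) := fun w P hP =>
    (fr_mp w).quasiMeasurePreserving.ae hP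
  have hfr : ∀ ξ w : Fin d → ℝ, f (fr ξ + w) = f (ξ + w) := by
    intro ξ w
    rw [← hper (fr ξ + w), ← hper (ξ + w)]
    congr 1
    ext i
    simp only [fr, Pi.add_apply]
    rw [← Int.fract_add_intCast (Int.fract (ξ i) + w i) ⌊ξ i⌋]
    congr 1
    have := Int.fract_add_floor (ξ i)
    linarith
  let H : AddSubgroup (Fin d → ℝ) :=
    { carrier := {z | ∀ᵐ ξ ∂(volume.restrict (cube d)), f (ξ + z) = f ξ}
      zero_mem' := by simp
      add_mem' := by
        intro z w hz hw
        have := hshift w _ hz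
        simp only [Set.mem_ofPred_eq] at hw ⊢
        filter_upwards [this, hw] with ξ h1 h2
        rw [hfr, hper, h2] at h1
        rw [← h1]; congr 1; abel
      neg_mem' := by
        intro z hz
        have := hshift (-z) _ hz
        simp only [Set.mem_ofPred_eq]
        filter_upwards [this] with ξ h1
        rw [hfr, hper] at h1
        rw [← h1]; congr 1; abel }
  have hH : H = ⊤ := by
    set E := {z | a z ≠ 0} with hE
    have hEm : MeasurableSet E := (measurableSet_singleton (0:ℝ)).compl.preimage hameas
    have hEpos : volume E ≠ 0 := by
      intro h0
      have : a =ᵐ[volume] 0 := by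
        rw [Filter.EventuallyEq, ae_iff]; exact h0
      rw [integral_congr_ae this] at hamass
      simp at hamass
    set B := toMeasurable volume {z | ¬ (a z ≠ 0 → z ∈ H)} with hB
    have hB0 : volume B = 0 := by
      rw [hB, measure_toMeasurable]; exact h
    have hpos : 0 < volume (E \ B) := by
      rw [measure_sdiff_null hB0]; exact pos_iff_ne_zero.2 hEpos
    have hn := Measure.sub_mem_nhds_zero_of_addHaar_pos volume (E \ B)
      (hEm.diff (measurableSet_toMeasurable _ _)) hpos
    have hsub : ∀ z ∈ E \ B, z ∈ H := by
      intro z hz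
      by_contra hc
      exact hz.2 (subset_toMeasurable _ _ (fun hh => hc (hh hz.1)))
    have hHn : (H : Set (Fin d → ℝ)) ∈ nhds 0 := by
      refine Filter.mem_of_superset hn ?_
      rintro _ ⟨x, hx, y, hy, rfl⟩
      exact H.sub_mem (hsub x hx) (hsub y hy)
    have hopen : IsOpen (H : Set (Fin d → ℝ)) := H.isOpen_of_mem_nhds hHn
    have hclopen : IsClopen (H : Set (Fin d → ℝ)) := ⟨H.isClosed_of_isOpen hopen, hopen⟩
    have := hclopen.eq_univ ⟨0, H.zero_mem⟩
    exact SetLike.coe_injective this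
  have hall : ∀ z, ∀ᵐ ξ ∂(volume.restrict (cube d)), f (ξ + z) = f ξ := by
    intro z
    have : z ∈ H := by rw [hH]; trivial
    exact this
  have hms : MeasurableSet {p : (Fin d → ℝ) × (Fin d → ℝ) | f (p.2 + p.1) = f p.2} :=
    measurableSet_eq_fun (hf.comp (by fun_prop)) (hf.comp (by fun_prop))
  have hp : ∀ᵐ p ∂((volume : Measure (Fin d → ℝ)).prod (volume.restrict (cube d))),
      f (p.2 + p.1) = f p.2 :=
    (Measure.ae_prod_iff_ae_ae hms).2 (Filter.Eventually.of_forall hall)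
  have hs : ∀ᵐ ξ ∂(volume.restrict (cube d)), ∀ᵐ z : Fin d → ℝ, f (ξ + z) = f ξ := by
    have := (Measure.measurePreserving_swap (μ := volume.restrict (cube d))
      (ν := (volume : Measure (Fin d → ℝ)))).quasiMeasurePreserving.ae hp
    exact Measure.ae_ae_of_ae_prod this
  obtain ⟨ξ0, h0⟩ := hs.exists
  refine ⟨f ξ0, ae_restrict_of_ae ?_⟩
  have := (measurePreserving_add_left (volume : Measure (Fin d → ℝ)) (-ξ0)).quasiMeasurePreserving.ae h0
  filter_upwards [this] with x hx
  simpa using hx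

/-- If `ρ ∈ H¹((0,1); L²(𝕋^d))` is time-periodic and solves the adjoint equation
`-∂_s ρ - A(s)ρ = 0` (in the equivalent integrated-in-time form), then `ρ` is constant a.e. on `𝕋^{d+1}`. -/
theorem stmt8 {d : ℕ} (hd : 1 ≤ d)
    (a : (Fin d → ℝ) → ℝ) (μ : (Fin d → ℝ) → (Fin d → ℝ) → ℝ → ℝ) (μm μp : ℝ)
    (hameas : Measurable a) (hanonneg : ∀ z, 0 ≤ a z)
    (haint : Integrable a) (hamass : ∫ z, a z = 1)
    (hamom : Integrable (fun z => ‖z‖ ^ 2 * a z))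
    (hasymm : ∀ z, a (-z) = a z)
    (hμmeas : Measurable fun p : (Fin d → ℝ) × (Fin d → ℝ) × ℝ => μ p.1 p.2.1 p.2.2)
    (hμper₁ : ∀ ξ η s, ∀ k : Fin d → ℤ, μ (ξ + fun i => (k i : ℝ)) η s = μ ξ η s)
    (hμper₂ : ∀ ξ η s, ∀ k : Fin d → ℤ, μ ξ (η + fun i => (k i : ℝ)) s = μ ξ η s)
    (hμper₃ : ∀ ξ η s, μ ξ η (s + 1) = μ ξ η s)
    (hμsymm : ∀ ξ η s, μ ξ η s = μ η ξ s)
    (hμm : 0 < μm) (hμlb : ∀ ξ η s, μm ≤ μ ξ η s) (hμub : ∀ ξ η s, μ ξ η s ≤ μp)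
    (ρ : (Fin d → ℝ) → ℝ → ℝ)
    (hρmeas : Measurable fun p : (Fin d → ℝ) × ℝ => ρ p.1 p.2)
    (hρper₁ : ∀ ξ s, ∀ k : Fin d → ℤ, ρ (ξ + fun i => (k i : ℝ)) s = ρ ξ s)
    (hρper₂ : ∀ ξ s, ρ ξ (s + 1) = ρ ξ s)
    (hρL2 : IntegrableOn (fun p : (Fin d → ℝ) × ℝ => (ρ p.1 p.2) ^ 2)
      (cube d ×ˢ Set.Ioo (0 : ℝ) 1))
    (hρeq : ∀ᵐ ξ ∂(volume : Measure (Fin d → ℝ)), ∀ s ∈ Set.Icc (0 : ℝ) 1,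
      ρ ξ s = ρ ξ 0 - ∫ τ in (0 : ℝ)..s, Aop a μ τ (fun η => ρ η τ) ξ) :
    ∃ c : ℝ, ∀ᵐ p ∂(volume.restrict (cube d ×ˢ Set.Ioo (0 : ℝ) 1)),
      ρ (Prod.fst p) (Prod.snd p) = c := by
  have := cube_finite d
  set C : Measure (Fin d → ℝ) := volume.restrict (cube d) with hC
  set I : Measure ℝ := volume.restrict (Set.Ioo (0:ℝ) 1) with hI
  have hIprob : IsProbabilityMeasure I := ⟨by simp [hI]⟩
  have hCI : (volume.restrict (cube d ×ˢ Set.Ioo (0 : ℝ) 1) : Measure ((Fin d → ℝ) × ℝ))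
      = C.prod I := by
    rw [Measure.volume_eq_prod, Measure.prod_restrict]
  rw [IntegrableOn, hCI] at hρL2
  rw [hCI]
  set κ : Measure ((Fin d → ℝ) × ((Fin d → ℝ) × ℝ)) := volume.prod (C.prod I) with hκ
  have hμp : 0 < μp := lt_of_lt_of_le hμm ((hμlb 0 0 0).trans (hμub 0 0 0))
  have hρfr : ∀ ξ s, ρ (fr ξ) s = ρ ξ s := by
    intro ξ s
    conv_rhs => rw [fr_eq ξ]
    rw [hρper₁]
  set Φ : (Fin d → ℝ) × ((Fin d → ℝ) × ℝ) → (Fin d → ℝ) × ((Fin d → ℝ) × ℝ) :=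
    fun p => (-p.1, (fr (p.2.1 + p.1), p.2.2)) with hΦ
  have hΦmp : MeasurePreserving Φ κ κ := Phi_mp I
  -- shift identities
  have hfrsub : ∀ ξ z : Fin d → ℝ, fr (ξ + z) + -z =
      ξ + fun i => ((-⌊(ξ + z) i⌋ : ℤ) : ℝ) := by
    intro ξ z
    ext i
    have := Int.fract_add_floor ((ξ + z) i)
    simp only [fr, Pi.add_apply, Pi.neg_apply, Int.cast_neg] at this ⊢
    linarith
  have hρ2 : ∀ ξ z s, ρ (fr (ξ + z) + -z) s = ρ ξ s := by
    intro ξ z s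
    rw [hfrsub, hρper₁]
  have hμ2 : ∀ ξ z s, μ (fr (ξ + z)) (fr (ξ + z) + -z) s = μ ξ (ξ + z) s := by
    intro ξ z s
    rw [hfrsub, hμper₂, hμsymm ξ]
    conv_rhs => rw [fr_eq (ξ + z)]
    rw [hμper₁]
  -- measurability
  have mρ1 : Measurable fun p : (Fin d → ℝ) × ((Fin d → ℝ) × ℝ) => ρ p.2.1 p.2.2 :=
    hρmeas.comp measurable_snd
  have mρ2 : Measurable fun p : (Fin d → ℝ) × ((Fin d → ℝ) × ℝ) => ρ (p.2.1 + p.1) p.2.2 :=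
    hρmeas.comp (g := fun p : (Fin d → ℝ) × ℝ => ρ p.1 p.2)
      (f := fun p : (Fin d → ℝ) × ((Fin d → ℝ) × ℝ) => (p.2.1 + p.1, p.2.2)) (by fun_prop)
  have mμ : Measurable fun p : (Fin d → ℝ) × ((Fin d → ℝ) × ℝ) =>
      μ p.2.1 (p.2.1 + p.1) p.2.2 :=
    hμmeas.comp (g := fun p : (Fin d → ℝ) × (Fin d → ℝ) × ℝ => μ p.1 p.2.1 p.2.2)
      (f := fun p : (Fin d → ℝ) × ((Fin d → ℝ) × ℝ) => (p.2.1, p.2.1 + p.1, p.2.2))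
      (by fun_prop)
  have ma : Measurable fun p : (Fin d → ℝ) × ((Fin d → ℝ) × ℝ) => a p.1 :=
    hameas.comp measurable_fst
  set F : (Fin d → ℝ) × ((Fin d → ℝ) × ℝ) → ℝ := fun p =>
    a p.1 * μ p.2.1 (p.2.1 + p.1) p.2.2 * (ρ (p.2.1 + p.1) p.2.2 - ρ p.2.1 p.2.2) with hF
  have mF : Measurable F := (ma.mul mμ).mul (mρ2.sub mρ1)
  set G : (Fin d → ℝ) × ((Fin d → ℝ) × ℝ) → ℝ := fun p => F p * ρ p.2.1 p.2.2 with hG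
  have mG : Measurable G := mF.mul mρ1
  -- integrability
  have i0 : Integrable (fun p : (Fin d → ℝ) × ((Fin d → ℝ) × ℝ) => a p.1 * 1) κ :=
    haint.mul_prod (integrable_const (1:ℝ))
  have i1 : Integrable (fun p : (Fin d → ℝ) × ((Fin d → ℝ) × ℝ) =>
      a p.1 * (ρ p.2.1 p.2.2) ^ 2) κ := haint.mul_prod hρL2
  have i2 : Integrable (fun p : (Fin d → ℝ) × ((Fin d → ℝ) × ℝ) =>
      a p.1 * (ρ (p.2.1 + p.1) p.2.2) ^ 2) κ := by
    have := hΦmp.integrable_comp_of_integrable i1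
    refine this.congr (Filter.Eventually.of_forall fun p => ?_)
    simp only [Function.comp, hΦ, hasymm, hρfr]
  have hμabs : ∀ ξ η s, |μ ξ η s| ≤ μp := fun ξ η s =>
    abs_le.2 ⟨by linarith [hμlb ξ η s], hμub ξ η s⟩
  have iF : Integrable F κ := by
    refine Integrable.mono' (((i0.add i1).add i2).const_mul μp) mF.aestronglyMeasurable
      (Filter.Eventually.of_forall fun p => ?_)
    simp only [hF, Real.norm_eq_abs, abs_mul, abs_of_nonneg (hanonneg p.1), Pi.add_apply]
    set x := ρ p.2.1 p.2.2
    set y := ρ (p.2.1 + p.1) p.2.2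
    have hxy : |y - x| ≤ 1 + x ^ 2 + y ^ 2 := by
      rw [abs_le]; constructor <;> nlinarith [sq_nonneg (x - 1), sq_nonneg (y - 1), sq_nonneg (x + 1), sq_nonneg (y + 1)]
    calc a p.1 * |μ p.2.1 (p.2.1 + p.1) p.2.2| * |y - x|
        ≤ a p.1 * μp * (1 + x ^ 2 + y ^ 2) := by
          have := hanonneg p.1
          gcongr
          exact hμabs _ _ _
      _ = _ := by ring
  have iG : Integrable G κ := by
    refine Integrable.mono' ((i1.add i2).const_mul (2 * μp)) mG.aestronglyMeasurable
      (Filter.Eventually.of_forall fun p => ?_)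
    simp only [hG, hF, Real.norm_eq_abs, abs_mul, abs_of_nonneg (hanonneg p.1), Pi.add_apply]
    set x := ρ p.2.1 p.2.2
    set y := ρ (p.2.1 + p.1) p.2.2
    have hxy : |y - x| * |x| ≤ 2 * (x ^ 2 + y ^ 2) := by
      rw [← abs_mul, abs_le]
      constructor <;> nlinarith [sq_nonneg (x - y), sq_nonneg (x + y)]
    calc a p.1 * |μ p.2.1 (p.2.1 + p.1) p.2.2| * |y - x| * |x|
        = a p.1 * |μ p.2.1 (p.2.1 + p.1) p.2.2| * (|y - x| * |x|) := by ring
      _ ≤ a p.1 * μp * (2 * (x ^ 2 + y ^ 2)) := by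
          have := hanonneg p.1
          gcongr
          exact hμabs _ _ _
      _ = _ := by ring
  -- Aop as an integral over z
  have hAop : ∀ ξ s, Aop a μ s (fun η => ρ η s) ξ = ∫ z, F (z, (ξ, s)) := by
    intro ξ s
    unfold Aop
    rw [← integral_add_left_eq_self _ ξ]
    refine integral_congr_ae (Filter.Eventually.of_forall fun z => ?_)
    simp only [hF, sub_add_cancel_left, hasymm]
  -- time integrability
  have iA : Integrable (fun q : (Fin d → ℝ) × ℝ => Aop a μ q.2 (fun η => ρ η q.2) q.1)
      (C.prod I) := by
    refine iF.integral_prod_right.congr (Filter.Eventually.of_forall fun q => ?_)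
    exact (hAop q.1 q.2).symm
  have hρeqC : ∀ᵐ ξ ∂C, ∀ s ∈ Set.Icc (0 : ℝ) 1,
      ρ ξ s = ρ ξ 0 - ∫ τ in (0 : ℝ)..s, Aop a μ τ (fun η => ρ η τ) ξ :=
    ae_restrict_of_ae hρeq
  have hIoo : ∀ g : ℝ → ℝ, ∫ s in (0:ℝ)..1, g s = ∫ s, g s ∂I := by
    intro g
    rw [intervalIntegral.integral_of_le zero_le_one, integral_Ioc_eq_integral_Ioo]
  have hzero : ∀ᵐ ξ ∂C, ∫ s, Aop a μ s (fun η => ρ η s) ξ * ρ ξ s ∂I = 0 := by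
    filter_upwards [hρeqC, iA.prod_right_ae] with ξ h1 h2
    have := calc_aux (fun s => Aop a μ s (fun η => ρ η s) ξ) (ρ ξ)
      ((intervalIntegrable_iff_integrableOn_Ioo_of_le zero_le_one).2 h2) h1
      (by simpa using hρper₂ ξ 0)
    rw [hIoo] at this
    rw [← this]
    exact integral_congr_ae (Filter.Eventually.of_forall fun s => mul_comm _ _)
  have hG0 : ∫ p, G p ∂κ = 0 := by
    rw [hκ, integral_prod_symm _ iG]
    have e : ∀ q : (Fin d → ℝ) × ℝ, ∫ z, G (z, q) =
        Aop a μ q.2 (fun η => ρ η q.2) q.1 * ρ q.1 q.2 := by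
      intro q
      rw [hAop, ← integral_mul_const]
    have iAρ : Integrable (fun q : (Fin d → ℝ) × ℝ =>
        Aop a μ q.2 (fun η => ρ η q.2) q.1 * ρ q.1 q.2) (C.prod I) :=
      iG.integral_prod_right.congr (Filter.Eventually.of_forall e)
    simp_rw [e]
    rw [integral_prod _ iAρ, integral_congr_ae hzero]
    simp
  have iGΦ : Integrable (fun p => G (Φ p)) κ := hΦmp.integrable_comp_of_integrable iG
  have hGΦ0 : ∫ p, G (Φ p) ∂κ = 0 := by
    have := integral_map (μ := κ) hΦmp.measurable.aemeasurable (f := G)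
      mG.aestronglyMeasurable
    rw [hΦmp.map_eq, hG0] at this
    exact this.symm
  have hid : ∀ p, G p + G (Φ p) = -(a p.1 * μ p.2.1 (p.2.1 + p.1) p.2.2 *
      (ρ (p.2.1 + p.1) p.2.2 - ρ p.2.1 p.2.2) ^ 2) := by
    intro p
    simp only [hG, hF, hΦ, hasymm, hρ2, hμ2, hρfr]
    ring
  have hq : ∀ᵐ p ∂κ, a p.1 ≠ 0 → ρ (p.2.1 + p.1) p.2.2 = ρ p.2.1 p.2.2 := by
    have hint : ∫ p, -(G p + G (Φ p)) ∂κ = 0 := by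
      rw [integral_neg, integral_add iG iGΦ, hG0, hGΦ0]; simp
    have hnn : 0 ≤ fun p => -(G p + G (Φ p)) := by
      intro p
      simp only [hid, neg_neg, Pi.zero_apply]
      have := hanonneg p.1
      have := hμm.le.trans (hμlb p.2.1 (p.2.1 + p.1) p.2.2)
      positivity
    have := (integral_eq_zero_iff_of_nonneg hnn (iG.add iGΦ).neg).1 hint
    filter_upwards [this] with p hp ha
    simp only [hid, neg_neg, Pi.zero_apply] at hp
    have := (hμm.trans_le (hμlb p.2.1 (p.2.1 + p.1) p.2.2)).ne'
    have h2 := (mul_eq_zero.1 hp).resolve_left (mul_ne_zero ha this)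
    exact sub_eq_zero.1 (pow_eq_zero_iff two_ne_zero |>.1 h2)
  have hF0 : ∀ᵐ p ∂κ, F p = 0 := by
    filter_upwards [hq] with p hp
    by_cases ha : a p.1 = 0
    · simp [hF, ha]
    · simp [hF, hp ha]
  have hA0 : ∀ᵐ q ∂(C.prod I), Aop a μ q.2 (fun η => ρ η q.2) q.1 = 0 := by
    have h1 := (Measure.measurePreserving_swap (μ := C.prod I)
      (ν := (volume : Measure (Fin d → ℝ)))).quasiMeasurePreserving.ae hF0
    filter_upwards [Measure.ae_ae_of_ae_prod h1] with q hq
    rw [hAop]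
    exact integral_eq_zero_of_ae hq
  have hρf : ∀ᵐ ξ ∂C, ∀ s ∈ Set.Icc (0:ℝ) 1, ρ ξ s = ρ ξ 0 := by
    filter_upwards [hρeqC, Measure.ae_ae_of_ae_prod hA0] with ξ h1 h2 s hs
    rw [h1 s hs]
    have : ∫ τ in (0 : ℝ)..s, Aop a μ τ (fun η => ρ η τ) ξ = 0 := by
      rw [intervalIntegral.integral_of_le hs.1, integral_Ioc_eq_integral_Ioo]
      exact integral_eq_zero_of_ae
        (ae_mono (Measure.restrict_mono (Set.Ioo_subset_Ioo_right hs.2) le_rfl) h2)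
    rw [this, sub_zero]
  set f : (Fin d → ℝ) → ℝ := fun ξ => ρ ξ 0 with hf
  have mf : Measurable f := hρmeas.comp (g := fun p : (Fin d → ℝ) × ℝ => ρ p.1 p.2)
    (f := fun ξ => (ξ, (0:ℝ))) (by fun_prop)
  have hIae : ∀ᵐ s ∂I, s ∈ Set.Icc (0:ℝ) 1 :=
    (ae_restrict_mem measurableSet_Ioo).mono fun s hs => Set.Ioo_subset_Icc_self hs
  have hρf2 : ∀ᵐ q ∂(C.prod I), ρ q.1 q.2 = f q.1 := by
    refine (Measure.ae_prod_iff_ae_ae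
      (measurableSet_eq_fun hρmeas (mf.comp measurable_fst))).2 ?_
    filter_upwards [hρf] with ξ h
    filter_upwards [hIae] with s hs using h s hs
  have hρf3 : ∀ᵐ p ∂κ, ρ p.2.1 p.2.2 = f p.2.1 :=
    Measure.quasiMeasurePreserving_snd.ae hρf2
  have hρf4 := hΦmp.quasiMeasurePreserving.ae hρf3
  have hst : ∀ᵐ z, a z ≠ 0 → ∀ᵐ ξ ∂C, f (ξ + z) = f ξ := by
    have hκae : ∀ᵐ p ∂κ, a p.1 ≠ 0 → f (p.2.1 + p.1) = f p.2.1 := by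
      filter_upwards [hq, hρf3, hρf4] with p h1 h2 h3 ha
      simp only [hΦ, hρfr, hf] at h3
      rw [← h2, ← h1 ha, h3]
    filter_upwards [Measure.ae_ae_of_ae_prod hκae] with z hz ha
    filter_upwards [Measure.ae_ae_of_ae_prod hz] with ξ hξ
    obtain ⟨s, hs⟩ := hξ.exists
    exact hs ha
  obtain ⟨c, hc⟩ := steinhaus_aux a hameas hamass f mf (fun ξ => hρfr ξ 0) hst
  refine ⟨c, ?_⟩
  have hc2 : ∀ᵐ q ∂(C.prod I), f q.1 = c := Measure.quasiMeasurePreserving_fst.ae hc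
  filter_upwards [hρf2, hc2] with q h1 h2
  rw [h1, h2]
end
end
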